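/- For all nonzero G ∈ A and nonzero monic H ∈ A, Σ over monic divisors D of H of |η(G,D)| is at most 2^{ω(H)} · |G|. -/

import Mathlib

/-!
`η(G,D)` is multiplicative in `D`, so it suffices to bound the sum of `|η(G,P^k)|` over
`k ≤ a` for each prime power `P^a` exactly dividing `H`, and to multiply the bounds.

Let `c(G,H)` be the sum of `E(G,H)` over all residues modulo `H`; by orthogonality it is `|H|`
if `H ∣ G` and `0` otherwise (`fullSum_of_dvd`, `fullSum_of_not_dvd`). Removing the multiples of
`P` gives `η(G,P^(k+1)) = c(G,P^(k+1)) - c(G,P^k)` (`eta_prime_pow_succ`). If `P^b` is the highest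
power of `P` dividing `G`, the sum of `|η(G,P^k)|` over `k ≤ a` therefore telescopes to `|P|^a`
when `a ≤ b`, and equals `|P|^b + |P|^b` when `a > b`, the second summand being
`|η(G,P^(b+1))|`. In both cases it is at most `2 |M|` for some `M` dividing `G` and `P^a`.

Multiplicativity (`eta_mul`) is the Chinese remainder theorem in the form
`X = X₁ H₂ + X₂ H₁`, together with `t_{KL}(AL) = t_K(A)` for monic `K`, `L`. The induction over
coprime factorizations of `H` keeps a common divisor `M` of `G` and `H` in place of `G`: coprime
such divisors multiply to a divisor of `G`, so the factors `|M|` combine to at most `|G|`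
(`exists_divisorSum_eta_le`).
-/

open Polynomial UniqueFactorizationMonoid

variable (p : ℕ) [Fact p.Prime] (F : Type) [Field F] [Fintype F] [DecidableEq F]
  [Algebra (ZMod p) F]

/-- The absolute value `|G| = q ^ deg G` of a polynomial over `𝔽_q`. -/
def anorm (G : Polynomial F) : ℕ := Fintype.card F ^ G.natDegree

/-- `t_H(A')`: the coefficient of `T^(m-1)` in the remainder of `A'` upon division by `H`,
where `m = deg H`. -/
noncomputable def tmap (H A' : Polynomial F) : F := (A' % H).coeff (H.natDegree - 1)

/-- The additive character `E(G,H)(D) = exp(2πi · tr(t_H(G·D)) / p)`. -/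
noncomputable def echar (G H D : Polynomial F) : ℂ :=
  Complex.exp (2 * Real.pi * Complex.I *
    ((Algebra.trace (ZMod p) F (tmap F H (G * D))).val : ℂ) / (p : ℂ))

open scoped Classical in
/-- `ω(G)`: the number of distinct monic irreducible divisors of `G`. -/
noncomputable def omega (G : Polynomial F) : ℕ := (normalizedFactors G).toFinset.card

open scoped Classical in
/-- The Möbius function on `𝔽_q[T]`. -/
noncomputable def mu (G : Polynomial F) : ℤ :=
  if Squarefree G then (-1) ^ omega F G else 0

/-- The polynomial Ramanujan sum `η(G,H)`: the sum of `E(G,H)(D)` over a complete residue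
system `D` modulo `H` with `(D,H) = 1`. -/
noncomputable def eta (G H : Polynomial F) : ℂ :=
  ∑' D : {D : Polynomial F // D.degree < H.degree ∧ IsCoprime D H}, echar p F G H D.1

open scoped Classical in
/-- The unitary gcd `(G,H)_*`: the monic polynomial of highest degree dividing `G` and
unitarily dividing `H`. -/
noncomputable def ugcd (G H : Polynomial F) : Polynomial F :=
  ∏ P ∈ (normalizedFactors H).toFinset,
    if P ^ (normalizedFactors H).count P ∣ G then P ^ (normalizedFactors H).count P else 1

/-- `μ*(G) = (-1)^(ω(G))`. -/
noncomputable def muStar (G : Polynomial F) : ℤ := (-1) ^ omega F G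

/-- The unitary polynomial Ramanujan sum `η*(G,H)`: the sum of `E(G,H)(D)` over a complete
residue system `D` modulo `H` with `(D,H)_* = 1`. -/
noncomputable def etaStar (G H : Polynomial F) : ℂ :=
  ∑' D : {D : Polynomial F // D.degree < H.degree ∧ ugcd F D H = 1}, echar p F G H D.1

/-! ### The character `E(G,H)` -/

set_option linter.unusedSectionVars false

/-- The additive character `x ↦ exp(2πi · tr(x) / p)` of `𝔽_q`. -/
noncomputable def traceChar : AddChar F ℂ :=
  (ZMod.stdAddChar (N := p)).compAddMonoidHom (Algebra.trace (ZMod p) F).toAddMonoidHom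

lemma echar_eq_traceChar (G H D : F[X]) :
    echar p F G H D = traceChar p F (tmap F H (G * D)) := by
  simp [echar, traceChar, ZMod.stdAddChar_apply, ZMod.toCircle_apply]

lemma exists_traceChar_ne_one : ∃ x : F, traceChar p F x ≠ 1 := by
  obtain ⟨x, hx⟩ := Algebra.trace_surjective (ZMod p) F 1
  refine ⟨x, fun h => ?_⟩
  have h' : ZMod.stdAddChar (N := p) 1 = ZMod.stdAddChar (N := p) 0 := by
    simpa [traceChar, hx] using h
  exact one_ne_zero (ZMod.injective_stdAddChar h')

lemma tmap_add (H A B : F[X]) : tmap F H (A + B) = tmap F H A + tmap F H B := by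
  simp [tmap, Polynomial.add_mod]

lemma dvd_sub_mod' (A K : F[X]) : K ∣ A - A % K :=
  ⟨A / K, by linear_combination -(EuclideanDomain.div_add_mod A K)⟩

lemma mul_mod_mul_right' {K L : F[X]} (hK : K ≠ 0) (hL : L ≠ 0) (A : F[X]) :
    (A * L) % (K * L) = (A % K) * L := by
  have h1 : (A * L) % (K * L) = ((A % K) * L) % (K * L) := by
    apply Polynomial.mod_eq_of_dvd_sub
    rw [← sub_mul]
    exact mul_dvd_mul_right (dvd_sub_mod' F A K) L
  rw [h1, Polynomial.mod_eq_self_iff (mul_ne_zero hK hL), degree_mul, degree_mul]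
  exact WithBot.add_lt_add_right (by simpa using hL) (Polynomial.degree_mod_lt A hK)

/-- Common monic factors of argument and modulus cancel in `t`. -/
lemma tmap_mul_right {K L : F[X]} (hK : K.Monic) (hL : L.Monic) (A : F[X]) :
    tmap F (K * L) (A * L) = tmap F K A := by
  rw [tmap, tmap, mul_mod_mul_right' F hK.ne_zero hL.ne_zero, hK.natDegree_mul hL]
  rcases Nat.eq_zero_or_pos K.natDegree with h0 | hpos
  · rw [hK.natDegree_eq_zero.mp h0, EuclideanDomain.mod_one]; simp
  · have hlt : (A % K).natDegree ≤ K.natDegree - 1 := by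
      by_cases hz : A % K = 0
      · simp [hz]
      · have := Polynomial.natDegree_lt_natDegree hz (Polynomial.degree_mod_lt A hK.ne_zero)
        omega
    have := Polynomial.coeff_mul_add_eq_of_natDegree_le hlt (le_refl L.natDegree)
    rw [show K.natDegree + L.natDegree - 1 = K.natDegree - 1 + L.natDegree by omega, this,
      hL.coeff_natDegree, mul_one]

/-! ### Complete residue systems -/

lemma finite_degree_lt (H : F[X]) : {D : F[X] | D.degree < H.degree}.Finite := by
  by_cases hH : H = 0
  · simp [hH]
  · have : Finite (degreeLT F H.natDegree) :=
      Finite.of_equiv _ (degreeLTEquiv F H.natDegree).toEquiv.symm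
    refine (Set.toFinite (degreeLT F H.natDegree : Set F[X])).subset fun D hD => ?_
    simpa [mem_degreeLT, degree_eq_natDegree hH] using hD

/-- The complete residue system modulo `H` of polynomials of degree less than `deg H`. -/
noncomputable def residues (H : F[X]) : Finset F[X] := (finite_degree_lt F H).toFinset

lemma mem_residues {H D : F[X]} : D ∈ residues F H ↔ D.degree < H.degree := by
  simp [residues]

open scoped Classical in
/-- The reduced residues modulo `H`. -/
noncomputable def units (H : F[X]) : Finset F[X] :=
  (residues F H).filter fun D => IsCoprime D H

lemma mem_units {H D : F[X]} : D ∈ units F H ↔ D.degree < H.degree ∧ IsCoprime D H := by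
  classical
  simp [units, mem_residues]

lemma eta_eq_sum (G H : F[X]) : eta p F G H = ∑ D ∈ units F H, echar p F G H D := by
  rw [_root_.eta, ← Finset.tsum_subtype]
  exact (Equiv.subtypeEquivRight fun D => (mem_units F).symm).tsum_eq
    (fun D : units F H => echar p F G H D.1)

/-- The full sum of `E(G,H)` over all residues modulo `H`. -/
noncomputable def fullSum (G H : F[X]) : ℂ := ∑ D ∈ residues F H, echar p F G H D

lemma fullSum_of_dvd {G H : F[X]} (hH : H.Monic) (h : H ∣ G) :
    fullSum p F G H = anorm F H := by
  have h1 : ∀ D, echar p F G H D = 1 := fun D => by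
    rw [echar_eq_traceChar, tmap, EuclideanDomain.mod_eq_zero.mpr (h.mul_right D)]
    simp
  have h2 : (residues F H).card = anorm F H := by
    have e : residues F H ≃ (Fin H.natDegree → F) :=
      (Equiv.subtypeEquivRight fun D => by
        rw [mem_residues, mem_degreeLT, degree_eq_natDegree hH.ne_zero]).trans
        (degreeLTEquiv F H.natDegree).toEquiv
    rw [← Fintype.card_coe, Fintype.card_congr e]
    simp [anorm]
  simp [fullSum, h1, h2]

/-- Orthogonality: if `H ∤ G`, some residue `D₀` has `E(G,H)(D₀) ≠ 1`, and translating the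
sum by `D₀` multiplies it by that value. -/
lemma fullSum_of_not_dvd {G H : F[X]} (hH : H.Monic) (h : ¬ H ∣ G) :
    fullSum p F G H = 0 := by
  have hR : G % H ≠ 0 := fun h' => h (EuclideanDomain.mod_eq_zero.mp h')
  have hdeg := Polynomial.natDegree_lt_natDegree hR (Polynomial.degree_mod_lt G hH.ne_zero)
  obtain ⟨x, hx⟩ := exists_traceChar_ne_one p F
  set R := G % H with hRdef
  have hlc : R.leadingCoeff ≠ 0 := leadingCoeff_ne_zero.mpr hR
  -- `R * D₀` has degree at most `deg H - 1`, with coefficient `x` there.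
  set D₀ : F[X] := monomial (H.natDegree - 1 - R.natDegree) (R.leadingCoeff⁻¹ * x) with hD₀
  have hD₀deg : D₀.natDegree ≤ H.natDegree - 1 - R.natDegree := natDegree_monomial_le _
  have hD₀lt : D₀.degree < H.degree :=
    degree_lt_degree (by omega)
  have hRD : (G * D₀) % H = R * D₀ := by
    have h1 : (G * D₀) % H = (R * D₀) % H := by
      apply Polynomial.mod_eq_of_dvd_sub
      rw [← sub_mul]
      exact (dvd_sub_mod' F G H).mul_right D₀
    rw [h1, Polynomial.mod_eq_self_iff hH.ne_zero]
    refine degree_lt_degree (natDegree_mul_le.trans_lt ?_)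
    omega
  have ht : tmap F H (G * D₀) = x := by
    have := Polynomial.coeff_mul_add_eq_of_natDegree_le (le_refl R.natDegree) hD₀deg
    rw [tmap, hRD, show H.natDegree - 1
      = R.natDegree + (H.natDegree - 1 - R.natDegree) by omega, this, hD₀, coeff_monomial_same,
      coeff_natDegree, mul_inv_cancel_left₀ hlc]
  have hshift : fullSum p F G H = fullSum p F G H * traceChar p F x := by
    rw [fullSum, Finset.sum_mul]
    symm
    refine Finset.sum_nbij' (fun D => D + D₀) (fun D => D - D₀) ?_ ?_ ?_ ?_ ?_
    · intro D hD
      rw [mem_residues] at hD ⊢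
      exact (degree_add_le _ _).trans_lt (max_lt hD hD₀lt)
    · intro D hD
      rw [mem_residues] at hD ⊢
      exact (degree_sub_le _ _).trans_lt (max_lt hD hD₀lt)
    · simp
    · simp
    · intro D _
      rw [echar_eq_traceChar, echar_eq_traceChar, mul_add, tmap_add, ht, AddChar.map_add_eq_mul]
  by_contra hne
  exact hx (mul_left_cancel₀ hne (by rw [← hshift, mul_one]))

/-! ### Multiplicativity in the modulus -/

/-- Chinese remainder theorem: the reduced residues modulo `H₁ H₂` are the
`X₁ H₂ + X₂ H₁` with `Xᵢ` a reduced residue modulo `Hᵢ`. -/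
lemma eta_mul {G H₁ H₂ : F[X]} (h₁ : H₁.Monic) (h₂ : H₂.Monic) (hc : IsCoprime H₁ H₂) :
    eta p F G (H₁ * H₂) = eta p F G H₁ * eta p F G H₂ := by
  have hdeg : ∀ X₁ X₂ : F[X], X₁.degree < H₁.degree → X₂.degree < H₂.degree →
      (X₁ * H₂ + X₂ * H₁).degree < (H₁ * H₂).degree := by
    intro X₁ X₂ hX₁ hX₂
    refine (degree_add_le _ _).trans_lt (max_lt ?_ ?_)
    · rw [degree_mul, degree_mul]
      exact WithBot.add_lt_add_right (by simpa using h₂.ne_zero) hX₁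
    · rw [mul_comm H₁, degree_mul, degree_mul]
      exact WithBot.add_lt_add_right (by simpa using h₁.ne_zero) hX₂
  have hcop : ∀ X₁ X₂ : F[X], IsCoprime (X₁ * H₂ + X₂ * H₁) (H₁ * H₂) ↔
      IsCoprime X₁ H₁ ∧ IsCoprime X₂ H₂ := by
    intro X₁ X₂
    rw [IsCoprime.mul_right_iff, IsCoprime.add_mul_right_left_iff, IsCoprime.mul_left_iff,
      add_comm, IsCoprime.add_mul_right_left_iff, IsCoprime.mul_left_iff]
    have := hc.symm
    tauto
  have key : ∀ A₁ A₂ B₁ B₂ : F[X], ∀ K L : F[X], IsCoprime K L → A₁.degree < K.degree →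
      B₁.degree < K.degree → A₁ * L + A₂ * K = B₁ * L + B₂ * K → A₁ = B₁ := by
    intro A₁ A₂ B₁ B₂ K L hKL hA hB he
    have hd : K ∣ (A₁ - B₁) * L := ⟨B₂ - A₂, by linear_combination he⟩
    exact sub_eq_zero.mp (eq_zero_of_dvd_of_degree_lt (hKL.dvd_of_dvd_mul_right hd)
      ((degree_sub_le _ _).trans_lt (max_lt hA hB)))
  rw [eta_eq_sum, eta_eq_sum, eta_eq_sum, Finset.sum_mul_sum, ← Finset.sum_product']
  symm
  refine Finset.sum_bij (fun x _ => x.1 * H₂ + x.2 * H₁) ?_ ?_ ?_ ?_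
  · rintro ⟨X₁, X₂⟩ hX
    simp only [Finset.mem_product, mem_units] at hX ⊢
    exact ⟨hdeg _ _ hX.1.1 hX.2.1, (hcop _ _).mpr ⟨hX.1.2, hX.2.2⟩⟩
  · rintro ⟨X₁, X₂⟩ hX ⟨Y₁, Y₂⟩ hY he
    simp only [Finset.mem_product, mem_units] at hX hY he
    refine Prod.ext (key _ _ _ _ _ _ hc hX.1.1 hY.1.1 he)
      (key X₂ X₁ Y₂ Y₁ _ _ hc.symm hX.2.1 hY.2.1 ?_)
    linear_combination he
  · intro X hX
    rw [mem_units] at hX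
    obtain ⟨u, v, huv⟩ := hc
    have d₁ := Polynomial.degree_mod_lt (X * v) h₁.ne_zero
    have d₂ := Polynomial.degree_mod_lt (X * u) h₂.ne_zero
    have e₁ := EuclideanDomain.div_add_mod (X * v) H₁
    have e₂ := EuclideanDomain.div_add_mod (X * u) H₂
    have hXe : (X * v) % H₁ * H₂ + (X * u) % H₂ * H₁ = X := by
      refine sub_eq_zero.mp (eq_zero_of_dvd_of_degree_lt (p := H₁ * H₂)
        ⟨-((X * v) / H₁ + (X * u) / H₂), ?_⟩
        ((degree_sub_le _ _).trans_lt (max_lt (hdeg _ _ d₁ d₂) hX.1)))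
      linear_combination H₂ * e₁ + H₁ * e₂ + X * huv
    have hX' := (hcop _ _).mp (hXe.symm ▸ hX.2)
    refine ⟨((X * v) % H₁, (X * u) % H₂), ?_, hXe⟩
    simp only [Finset.mem_product, mem_units]
    exact ⟨⟨d₁, hX'.1⟩, ⟨d₂, hX'.2⟩⟩
  · rintro ⟨X₁, X₂⟩ _
    rw [echar_eq_traceChar, echar_eq_traceChar, echar_eq_traceChar, ← AddChar.map_add_eq_mul,
      mul_add, tmap_add, ← mul_assoc, ← mul_assoc, tmap_mul_right F h₁ h₂, mul_comm H₁,
      tmap_mul_right F h₂ h₁]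

/-! ### Prime powers -/

lemma eta_one (G : F[X]) : eta p F G 1 = 1 := by
  have : units F (1 : F[X]) = {0} := by
    ext D
    simp [mem_units, isCoprime_one_right, Nat.WithBot.lt_zero_iff]
  rw [eta_eq_sum, this, Finset.sum_singleton, echar_eq_traceChar, tmap]
  simp

/-- The residues modulo `P^(k+1)` that are not coprime to `P` are the `P D'` with `D'` a
residue modulo `P^k`, and `E(G,P^(k+1))(P D') = E(G,P^k)(D')`. -/
lemma eta_prime_pow_succ {G P : F[X]} (hP : P.Monic) (hPi : Irreducible P) (k : ℕ) :
    eta p F G (P ^ (k + 1)) = fullSum p F G (P ^ (k + 1)) - fullSum p F G (P ^ k) := by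
  classical
  rw [eq_sub_iff_add_eq, eta_eq_sum, units, fullSum, fullSum,
    ← Finset.sum_filter_add_sum_filter_not (residues F (P ^ (k + 1)))
      (fun D => IsCoprime D (P ^ (k + 1))) (echar p F G (P ^ (k + 1)))]
  congr 1
  have hdeg : ∀ D : F[X], (D * P).degree < (P ^ (k + 1)).degree ↔ D.degree < (P ^ k).degree := by
    intro D
    rw [pow_succ, degree_mul, degree_mul]
    exact WithBot.add_lt_add_iff_right (by simpa using hP.ne_zero)
  refine Finset.sum_bij (fun D _ => D * P) ?_ ?_ ?_ ?_
  · intro D hD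
    rw [mem_residues] at hD
    rw [Finset.mem_filter, mem_residues, hdeg]
    refine ⟨hD, fun hc => hPi.not_isUnit ?_⟩
    exact hc.isUnit_of_dvd' (Dvd.intro_left D rfl) (dvd_pow_self P k.succ_ne_zero)
  · intro D _ D' _ h
    exact mul_right_cancel₀ hP.ne_zero h
  · intro D hD
    rw [Finset.mem_filter, mem_residues, IsCoprime.pow_right_iff k.succ_pos, isCoprime_comm,
      hPi.coprime_iff_not_dvd, not_not] at hD
    obtain ⟨hD, D', rfl⟩ := hD
    rw [mul_comm P] at hD
    exact ⟨D', by rwa [mem_residues, ← hdeg], mul_comm _ _⟩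
  · intro D _
    rw [echar_eq_traceChar, echar_eq_traceChar, pow_succ, ← mul_assoc,
      tmap_mul_right F (hP.pow k) hP]

lemma sum_prime_pow_of_dvd {G P : F[X]} (hP : P.Monic) (hPi : Irreducible P) (a : ℕ)
    (h : P ^ a ∣ G) :
    ∑ k ∈ Finset.range (a + 1), ‖eta p F G (P ^ k)‖ = anorm F (P ^ a) := by
  induction a with
  | zero => simp [eta_one, anorm]
  | succ a ih =>
    have h' : P ^ a ∣ G := (pow_dvd_pow P a.le_succ).trans h
    rw [Finset.sum_range_succ, ih h', eta_prime_pow_succ p F hP hPi,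
      fullSum_of_dvd p F (hP.pow _) h, fullSum_of_dvd p F (hP.pow _) h']
    have hle : anorm F (P ^ a) ≤ anorm F (P ^ (a + 1)) := by
      apply Nat.pow_le_pow_right Fintype.card_pos
      simp only [natDegree_pow]
      gcongr
      omega
    rw [← Nat.cast_sub hle, Complex.norm_natCast, Nat.cast_sub hle]
    ring

/-- With the norm of the full sum modulo `P^a` added, the bound is stable under increasing
`a` beyond the exponent of `P` in `G`. -/
lemma sum_prime_pow_add_le {G P : F[X]} (hP : P.Monic) (hPi : Irreducible P) (a : ℕ) :
    ∃ j ≤ a, P ^ j ∣ G ∧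
      ∑ k ∈ Finset.range (a + 1), ‖eta p F G (P ^ k)‖ + ‖fullSum p F G (P ^ a)‖
        ≤ 2 * anorm F (P ^ j) := by
  by_cases h : P ^ a ∣ G
  · refine ⟨a, le_rfl, h, ?_⟩
    rw [sum_prime_pow_of_dvd p F hP hPi a h, fullSum_of_dvd p F (hP.pow _) h,
      Complex.norm_natCast, two_mul]
  induction a with
  | zero => simp at h
  | succ a ih =>
    obtain ⟨j, hj, hjG, hle⟩ : ∃ j ≤ a, P ^ j ∣ G ∧
        ∑ k ∈ Finset.range (a + 1), ‖eta p F G (P ^ k)‖ + ‖fullSum p F G (P ^ a)‖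
        ≤ 2 * anorm F (P ^ j) := by
      by_cases h' : P ^ a ∣ G
      · refine ⟨a, le_rfl, h', ?_⟩
        rw [sum_prime_pow_of_dvd p F hP hPi a h', fullSum_of_dvd p F (hP.pow _) h',
          Complex.norm_natCast, two_mul]
      · exact ih h'
    refine ⟨j, hj.trans a.le_succ, hjG, ?_⟩
    rw [Finset.sum_range_succ, eta_prime_pow_succ p F hP hPi,
      fullSum_of_not_dvd p F (hP.pow _) h]
    simpa using hle

/-! ### Sums over monic divisors -/

lemma finite_monic_divisors {H : F[X]} (hH : H ≠ 0) :
    {D : F[X] | D.Monic ∧ D ∣ H}.Finite := by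
  refine (finite_degree_lt F (H * X)).subset fun D hD => ?_
  refine (degree_le_of_dvd hD.2 hH).trans_lt ?_
  rw [degree_mul, degree_X, degree_eq_natDegree hH]
  exact_mod_cast Nat.lt_succ_self _

/-- The sum of `f` over the monic divisors of `H`. -/
noncomputable def divisorSum (f : F[X] → ℝ) (H : F[X]) : ℝ :=
  ∑' D : {D : F[X] // D.Monic ∧ D ∣ H}, f D.1

lemma divisorSum_eq (f : F[X] → ℝ) {H : F[X]} (hH : H ≠ 0) :
    divisorSum F f H = ∑ D ∈ (finite_monic_divisors F hH).toFinset, f D := by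
  rw [divisorSum, ← Finset.tsum_subtype]
  exact (Equiv.subtypeEquivRight fun D => by simp).tsum_eq
    (fun D : (finite_monic_divisors F hH).toFinset => f D.1)

/-- If every monic divisor of `H` is of the form `g i` with `i ∈ s`, the divisor sum is at
most the sum over `s`. -/
lemma divisorSum_le_sum {ι : Type} (s : Finset ι) (g : ι → F[X]) (f : F[X] → ℝ)
    (hf : ∀ D, 0 ≤ f D) {H : F[X]} (hH : H ≠ 0)
    (hg : ∀ D : F[X], D.Monic → D ∣ H → ∃ i ∈ s, g i = D) :
    divisorSum F f H ≤ ∑ i ∈ s, f (g i) := by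
  classical
  rw [divisorSum_eq F f hH]
  refine (Finset.sum_le_sum_of_subset_of_nonneg (t := s.image g) ?_ fun D _ _ => hf D).trans
    (Finset.sum_image_le_of_nonneg fun D _ => hf D)
  intro D hD
  simp only [Set.Finite.mem_toFinset, Set.mem_ofPred_eq] at hD
  simpa using hg D hD.1 hD.2

lemma divisorSum_eta_mul_le {G H₁ H₂ : F[X]} (h₁ : H₁ ≠ 0) (h₂ : H₂ ≠ 0)
    (hc : IsCoprime H₁ H₂) :
    divisorSum F (fun D => ‖eta p F G D‖) (H₁ * H₂) ≤
      divisorSum F (fun D => ‖eta p F G D‖) H₁ * divisorSum F (fun D => ‖eta p F G D‖) H₂ := by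
  rw [divisorSum_eq F _ h₁, divisorSum_eq F _ h₂, Finset.sum_mul_sum, ← Finset.sum_product']
  refine (divisorSum_le_sum F ((finite_monic_divisors F h₁).toFinset ×ˢ
    (finite_monic_divisors F h₂).toFinset) (fun x => x.1 * x.2) _ (fun D => norm_nonneg _)
    (mul_ne_zero h₁ h₂) ?_).trans_eq (Finset.sum_congr rfl ?_)
  · intro D hD hdvd
    obtain ⟨A, B, hA, hB, rfl⟩ := exists_dvd_and_dvd_of_dvd_mul hdvd
    have hA0 : A ≠ 0 := ne_zero_of_dvd_ne_zero h₁ hA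
    have hB0 : B ≠ 0 := ne_zero_of_dvd_ne_zero h₂ hB
    have hlc : A.leadingCoeff * B.leadingCoeff = 1 := by rw [← leadingCoeff_mul]; exact hD
    refine ⟨(A * C A.leadingCoeff⁻¹, B * C B.leadingCoeff⁻¹), ?_, ?_⟩
    · have dv : ∀ Q R : F[X], Q ≠ 0 → Q ∣ R → Q * C Q.leadingCoeff⁻¹ ∣ R := fun Q R hQ hQR =>
        (IsUnit.mul_right_dvd (isUnit_C.mpr (by simpa using hQ))).mpr hQR
      simp only [Finset.mem_product, Set.Finite.mem_toFinset, Set.mem_ofPred_eq]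
      exact ⟨⟨monic_mul_leadingCoeff_inv hA0, dv _ _ hA0 hA⟩,
        ⟨monic_mul_leadingCoeff_inv hB0, dv _ _ hB0 hB⟩⟩
    · have : C A.leadingCoeff⁻¹ * C B.leadingCoeff⁻¹ = (1 : F[X]) := by
        rw [← C_mul, ← mul_inv, hlc, inv_one, C_1]
      linear_combination A * B * this
  · rintro ⟨A, B⟩ hx
    simp only [Finset.mem_product, Set.Finite.mem_toFinset, Set.mem_ofPred_eq] at hx
    simp only
    rw [eta_mul p F hx.1.1 hx.2.1 ((hc.of_isCoprime_of_dvd_left hx.1.2).of_isCoprime_of_dvd_right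
      hx.2.2), norm_mul]

lemma divisorSum_eta_isUnit {G H : F[X]} (hH : IsUnit H) :
    divisorSum F (fun D => ‖eta p F G D‖) H ≤ 1 := by
  refine (divisorSum_le_sum F {()} (fun _ => 1) _ (fun D => norm_nonneg _) hH.ne_zero
    fun D hD hdvd => ⟨(), by simp, ?_⟩).trans_eq (by simp [eta_one])
  exact (hD.isUnit_iff.mp (isUnit_of_dvd_unit hdvd hH)).symm

lemma divisorSum_eta_prime_pow {G Q : F[X]} (hQ : Prime Q) (a : ℕ) :
    ∃ M, M ∣ G ∧ M ∣ Q ^ a ∧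
      divisorSum F (fun D => ‖eta p F G D‖) (Q ^ a) ≤ 2 * anorm F M := by
  set P := Q * C Q.leadingCoeff⁻¹ with hPdef
  have hPm : P.Monic := monic_mul_leadingCoeff_inv hQ.ne_zero
  have hPQ : Associated Q P :=
    associated_mul_unit_right _ _ (isUnit_C.mpr (by simpa using hQ.ne_zero))
  have hPi : Irreducible P := hPQ.irreducible hQ.irreducible
  obtain ⟨j, hj, hjG, hle⟩ := sum_prime_pow_add_le p F (G := G) hPm hPi a
  refine ⟨P ^ j, hjG, (pow_dvd_pow P hj).trans (hPQ.symm.pow_pow).dvd, le_trans ?_ hle⟩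
  refine (divisorSum_le_sum F (Finset.range (a + 1)) (fun k => P ^ k) _
    (fun D => norm_nonneg _) (pow_ne_zero a hQ.ne_zero) ?_).trans
    (le_add_of_nonneg_right (norm_nonneg _))
  intro D hD hdvd
  obtain ⟨k, hk, hassoc⟩ := (dvd_prime_pow hQ a).mp hdvd
  exact ⟨k, Finset.mem_range.mpr (by omega), eq_of_monic_of_associated (hPm.pow k) hD
    (hassoc.trans hPQ.pow_pow).symm⟩

lemma omega_mul {H₁ H₂ : F[X]} (hc : IsRelPrime H₁ H₂) :
    omega F (H₁ * H₂) = omega F H₁ + omega F H₂ := by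
  rw [omega, omega, omega, toFinset_normalizedFactors, toFinset_normalizedFactors,
    toFinset_normalizedFactors, primeFactors_mul_eq_disjUnion hc, Finset.card_disjUnion]

lemma omega_prime_pow {Q : F[X]} (hQ : Prime Q) {a : ℕ} (ha : a ≠ 0) :
    omega F (Q ^ a) = 1 := by
  classical
  rw [omega, toFinset_normalizedFactors, primeFactors_pow Q ha, primeFactors,
    normalizedFactors_irreducible hQ.irreducible]
  simp

/-- The bound with `|G|` sharpened to `|M|` for a common divisor `M` of `G` and `H`; in this
form it multiplies over coprime moduli. -/
lemma exists_divisorSum_eta_le (G H : F[X]) (hH : H ≠ 0) :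
    ∃ M, M ∣ G ∧ M ∣ H ∧
      divisorSum F (fun D => ‖eta p F G D‖) H ≤ (2 : ℝ) ^ omega F H * (anorm F M : ℝ) := by
  have hunit : ∀ U : F[X], IsUnit U → ∃ M, M ∣ G ∧ M ∣ U ∧
      divisorSum F (fun D => ‖eta p F G D‖) U ≤ (2 : ℝ) ^ omega F U * (anorm F M : ℝ) :=
    fun U hU => ⟨1, one_dvd _, one_dvd _, (divisorSum_eta_isUnit p F hU).trans (by
      simpa [anorm] using one_le_pow₀ (one_le_two (α := ℝ)))⟩
  induction H using UniqueFactorizationMonoid.induction_on_coprime with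
  | h0 => exact absurd rfl hH
  | h1 hU => exact hunit _ hU
  | hpr a hQ =>
    rcases Nat.eq_zero_or_pos a with rfl | ha
    · exact hunit _ (by simp)
    · obtain ⟨M, h1, h2, h3⟩ := divisorSum_eta_prime_pow p F (G := G) hQ a
      exact ⟨M, h1, h2, by rwa [omega_prime_pow F hQ ha.ne', pow_one]⟩
  | @hcp H₁ H₂ hc ih₁ ih₂ =>
    have hH₁ := left_ne_zero_of_mul hH
    have hH₂ := right_ne_zero_of_mul hH
    obtain ⟨M₁, hG₁, hd₁, hle₁⟩ := ih₁ hH₁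
    obtain ⟨M₂, hG₂, hd₂, hle₂⟩ := ih₂ hH₂
    have hc' : IsCoprime H₁ H₂ := isRelPrime_iff_isCoprime.mp hc
    refine ⟨M₁ * M₂, ((hc'.of_isCoprime_of_dvd_left hd₁).of_isCoprime_of_dvd_right
      hd₂).mul_dvd hG₁ hG₂, mul_dvd_mul hd₁ hd₂,
      (divisorSum_eta_mul_le p F hH₁ hH₂ hc').trans ?_⟩
    have hnorm : anorm F (M₁ * M₂) = anorm F M₁ * anorm F M₂ := by
      rw [anorm, anorm, anorm, natDegree_mul (ne_zero_of_dvd_ne_zero hH₁ hd₁)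
        (ne_zero_of_dvd_ne_zero hH₂ hd₂), pow_add]
    rw [omega_mul F hc, pow_add, hnorm, Nat.cast_mul, mul_mul_mul_comm]
    exact mul_le_mul hle₁ hle₂ (tsum_nonneg fun D => norm_nonneg _) (by positivity)

/-- For nonzero `G` and nonzero monic `H`, the sum of `|η(G,D)|` over the monic divisors `D`
of `H` is at most `2^(ω(H)) · |G|`. -/
theorem sum_abs_eta_divisors_le (G H : Polynomial F) (hG : G ≠ 0)
    (hH : H.Monic) (hH0 : H ≠ 0) :
    (∑' D : {D : Polynomial F // D.Monic ∧ D ∣ H}, ‖eta p F G D.1‖) ≤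
      (2 : ℝ) ^ omega F H * (anorm F G : ℝ) := by
  obtain ⟨M, hMG, -, hle⟩ := exists_divisorSum_eta_le p F G H hH0
  refine hle.trans (mul_le_mul_of_nonneg_left ?_ (by positivity))
  exact_mod_cast Nat.pow_le_pow_right Fintype.card_pos (natDegree_le_of_dvd hMG hG)
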